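/- Let X be a real Banach space and let C, D ⊆ X be nonempty convex sets such that C is compact and D is simultaneously strongly proximinal. Then C + D is simultaneously strongly proximinal. -/

import Mathlib

/-!
Fix a nonempty bounded `A` and put `m = d(A, C + D)`. Approximating `A` by `c + y` is the same as
approximating the translate `A - c` by `y`, so `m` is the infimum over `c ∈ C` of
`g c = d(A - c, D)`. The function `g` is 1-Lipschitz, hence attains its infimum on the compact set
`C`, and a best approximation of `A - c₀` in `D` at a minimizer `c₀` gives one of `A` in `C + D`.

For strong proximinality, consider each `c₀ ∈ C` separately. If `g c₀ > m`, then no `c + y` with `c`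
close to `c₀` is nearly optimal. If `g c₀ = m` and `c + y` is nearly optimal with `c` close to `c₀`,
then `y` is nearly optimal for `A - c₀`, so that strong proximinality of `D` applies to `y`.
Compactness of `C` makes these local estimates uniform.
-/

open Filter Topology Pointwise

variable {X : Type*} [NormedAddCommGroup X] [NormedSpace ℝ X]

/-- `simSup A y = sup_{a ∈ A} ‖a - y‖`. -/
noncomputable def simSup (A : Set X) (y : X) : ℝ := ⨆ a : A, ‖(a : X) - y‖

/-- `simDist A C = inf_{y ∈ C} sup_{a ∈ A} ‖a - y‖`. -/
noncomputable def simDist (A C : Set X) : ℝ := ⨅ y : C, simSup A (y : X)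

/-- The set of best simultaneous approximations `P_C(A)`. -/
def simBest (A C : Set X) : Set X := {y | y ∈ C ∧ simSup A y = simDist A C}

/-- The set `P_C(A, δ)`. -/
def simBestApprox (A C : Set X) (δ : ℝ) : Set X :=
  {y | y ∈ C ∧ simSup A y < simDist A C + δ}

/-- `C` is simultaneously proximinal. -/
def SimProximinal (C : Set X) : Prop :=
  ∀ A : Set X, A.Nonempty → Bornology.IsBounded A → (simBest A C).Nonempty

/-- `y` is a minimizing sequence in `C` for `A`. -/
def IsMinimizing (A C : Set X) (y : ℕ → X) : Prop :=
  (∀ n, y n ∈ C) ∧ Tendsto (fun n => simSup A (y n)) atTop (𝓝 (simDist A C))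

/-- Weak convergence of a sequence. -/
def WeakTendsto (y : ℕ → X) (c : X) : Prop :=
  ∀ f : X →L[ℝ] ℝ, Tendsto (fun n => f (y n)) atTop (𝓝 (f c))

/-- `C` is simultaneously approximatively compact. -/
def SimApproxCompact (C : Set X) : Prop :=
  ∀ A : Set X, A.Nonempty → Bornology.IsBounded A → ∀ y : ℕ → X, IsMinimizing A C y →
    ∃ c ∈ C, ∃ φ : ℕ → ℕ, StrictMono φ ∧ Tendsto (y ∘ φ) atTop (𝓝 c)

/-- `C` is simultaneously approximatively weakly compact. -/
def SimApproxWeakCompact (C : Set X) : Prop :=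
  ∀ A : Set X, A.Nonempty → Bornology.IsBounded A → ∀ y : ℕ → X, IsMinimizing A C y →
    ∃ c ∈ C, ∃ φ : ℕ → ℕ, StrictMono φ ∧ WeakTendsto (y ∘ φ) c

/-- `C` is simultaneously strongly proximinal. -/
def SimStronglyProximinal (C : Set X) : Prop :=
  SimProximinal C ∧ ∀ A : Set X, A.Nonempty → Bornology.IsBounded A → ∀ ε > (0 : ℝ),
    ∃ δ > (0 : ℝ), simBestApprox A C δ ⊆ simBest A C + Metric.closedBall (0 : X) ε

/-- `C` is simultaneously weakly strongly proximinal. -/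
def SimWeakStronglyProximinal (C : Set X) : Prop :=
  SimProximinal C ∧ ∀ A : Set X, A.Nonempty → Bornology.IsBounded A →
    ∀ V : Set X, V ∈ 𝓝 (0 : WeakSpace ℝ X) → ∃ δ > (0 : ℝ),
      simBestApprox A C δ ⊆ simBest A C + V

section

variable {E : Type*} [NormedAddCommGroup E] {A C D : Set E} {a c c₀ y : E} {r ε : ℝ}

lemma simSup_nonneg (A : Set E) (y : E) : 0 ≤ simSup A y :=
  Real.iSup_nonneg fun _ => norm_nonneg _

lemma norm_sub_le_simSup (hA : Bornology.IsBounded A) (ha : a ∈ A) (y : E) :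
    ‖a - y‖ ≤ simSup A y := by
  obtain ⟨M, hM⟩ := (hA.sub (Bornology.isBounded_singleton (x := y))).exists_norm_le
  have hbdd : BddAbove (Set.range fun a : A => ‖(a : E) - y‖) :=
    ⟨M, Set.forall_mem_range.2 fun a => hM _ (Set.sub_mem_sub a.2 rfl)⟩
  exact le_ciSup hbdd ⟨a, ha⟩

lemma simSup_le_add_dist (hA : Bornology.IsBounded A) (y z : E) :
    simSup A y ≤ simSup A z + dist y z := by
  refine Real.iSup_le (fun a => ?_) (add_nonneg (simSup_nonneg A z) dist_nonneg)
  calc ‖(a : E) - y‖ ≤ ‖(a : E) - z‖ + ‖z - y‖ := norm_sub_le_norm_sub_add_norm_sub _ _ _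
    _ ≤ simSup A z + dist y z := by
      rw [dist_eq_norm_sub' y z]
      gcongr
      exact norm_sub_le_simSup hA a.2 z

lemma simDist_le_simSup (hy : y ∈ C) : simDist A C ≤ simSup A y :=
  ciInf_le (f := fun z : C => simSup A (z : E))
    ⟨0, Set.forall_mem_range.2 fun z => simSup_nonneg A z⟩ ⟨y, hy⟩

lemma le_simDist (hC : C.Nonempty) (h : ∀ y ∈ C, r ≤ simSup A y) : r ≤ simDist A C :=
  have : Nonempty C := hC.to_subtype
  le_ciInf fun y => h y y.2

lemma simSup_sub_singleton (A : Set E) (c y : E) : simSup (A - {c}) y = simSup A (c + y) :=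
  calc
    simSup (A - {c}) y = sSup ((fun a => ‖a - y‖) '' (A - {c})) := by rw [sSup_image', simSup]
    _ = sSup ((fun a => ‖a - (c + y)‖) '' A) := by
      simp only [Set.sub_singleton, Set.image_image, sub_sub]
    _ = simSup A (c + y) := by rw [sSup_image', simSup]

lemma simDist_add_le (hD : D.Nonempty) (hc : c ∈ C) :
    simDist A (C + D) ≤ simDist (A - {c}) D :=
  le_simDist hD fun y hy => by
    rw [simSup_sub_singleton]
    exact simDist_le_simSup (Set.add_mem_add hc hy)

lemma simDist_sub_singleton_le (hy : y ∈ D) : simDist (A - {c}) D ≤ simSup A (c + y) :=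
  simSup_sub_singleton A c y ▸ simDist_le_simSup hy

lemma lipschitzWith_simDist_sub_singleton (hA : Bornology.IsBounded A) (hD : D.Nonempty) :
    LipschitzWith 1 fun c => simDist (A - {c}) D := by
  refine LipschitzWith.of_le_add fun b c => ?_
  have hle : ∀ y ∈ D, simDist (A - {b}) D - dist b c ≤ simSup (A - {c}) y := fun y hy => by
    rw [sub_le_iff_le_add, simSup_sub_singleton, ← dist_add_right b c y]
    exact (simDist_sub_singleton_le hy).trans (simSup_le_add_dist hA _ _)
  exact sub_le_iff_le_add.1 (le_simDist hD hle)

lemma exists_simDist_sub_singleton_eq (hA : Bornology.IsBounded A) (hC : IsCompact C)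
    (hCne : C.Nonempty) (hD : D.Nonempty) :
    ∃ c ∈ C, simDist (A - {c}) D = simDist A (C + D) := by
  obtain ⟨c₀, hc₀, hmin⟩ := hC.exists_isMinOn hCne
    (lipschitzWith_simDist_sub_singleton hA hD).continuous.continuousOn
  refine ⟨c₀, hc₀, le_antisymm (le_simDist (hCne.add hD) ?_) (simDist_add_le hD hc₀)⟩
  rintro _ ⟨c, hc, y, hy, rfl⟩
  exact (hmin hc).trans (simDist_sub_singleton_le hy)

lemma singleton_add_simBest_subset (hc : c ∈ C)
    (h : simDist (A - {c}) D = simDist A (C + D)) :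
    {c} + simBest (A - {c}) D ⊆ simBest A (C + D) := by
  rintro _ ⟨_, rfl, p, ⟨hpD, hp⟩, rfl⟩
  exact ⟨Set.add_mem_add hc hpD, by rw [← simSup_sub_singleton, hp, h]⟩

lemma SimProximinal.nonempty (hD : SimProximinal D) : D.Nonempty :=
  (hD {0} (Set.singleton_nonempty 0) Bornology.isBounded_singleton).mono fun _ hy => hy.1

theorem SimProximinal.compact_add (hD : SimProximinal D) (hC : IsCompact C)
    (hCne : C.Nonempty) : SimProximinal (C + D) := by
  intro A hAne hA
  obtain ⟨c, hc, heq⟩ := exists_simDist_sub_singleton_eq hA hC hCne hD.nonempty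
  have hbest : (simBest (A - {c}) D).Nonempty :=
    hD _ (hAne.sub (Set.singleton_nonempty c)) (hA.sub Bornology.isBounded_singleton)
  exact ((Set.singleton_nonempty c).add hbest).mono (singleton_add_simBest_subset hc heq)

-- Here and below `p = (δ, c)`: joint neighbourhoods of `(0, c₀)` let compactness of `C` produce a
-- single `δ`.
lemma eventually_forall_add_lt_simSup (hA : Bornology.IsBounded A) (hD : D.Nonempty)
    (hr : r < simDist (A - {c₀}) D) :
    ∀ᶠ p : ℝ × E in 𝓝 (0, c₀), ∀ y ∈ D, r + p.1 < simSup A (p.2 + y) := by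
  have hcont : Continuous fun p : ℝ × E => simDist (A - {p.2}) D :=
    (lipschitzWith_simDist_sub_singleton hA hD).continuous.comp continuous_snd
  have hlt : ∀ᶠ p : ℝ × E in 𝓝 (0, c₀), r + p.1 < simDist (A - {p.2}) D :=
    (continuous_fst.const_add r).continuousAt.eventually_lt hcont.continuousAt
      (by simpa only [add_zero] using hr)
  filter_upwards [hlt] with p hp y hy
  exact hp.trans_le (simDist_sub_singleton_le hy)

lemma SimStronglyProximinal.eventually_forall_add_mem (hD : SimStronglyProximinal D)
    (hAne : A.Nonempty) (hA : Bornology.IsBounded A) (c₀ : E) (hε : 0 < ε) :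
    ∀ᶠ p : ℝ × E in 𝓝 (0, c₀), ∀ y ∈ D, simSup A (p.2 + y) < simDist (A - {c₀}) D + p.1 →
      p.2 + y ∈ {c₀} + simBest (A - {c₀}) D + Metric.closedBall 0 ε := by
  obtain ⟨δ, hδ, hsub⟩ := hD.2 (A - {c₀}) (hAne.sub (Set.singleton_nonempty c₀))
    (hA.sub Bornology.isBounded_singleton) (ε / 2) (half_pos hε)
  have hcont : Continuous fun p : ℝ × E => dist c₀ p.2 := by fun_prop
  have hdist : ∀ᶠ p : ℝ × E in 𝓝 (0, c₀), dist c₀ p.2 < ε / 2 :=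
    hcont.continuousAt.eventually_lt_const (by simpa only [dist_self] using half_pos hε)
  have hsum : ∀ᶠ p : ℝ × E in 𝓝 (0, c₀), p.1 + dist c₀ p.2 < δ :=
    (continuous_fst.fun_add hcont).continuousAt.eventually_lt_const
      (by simpa only [dist_self, add_zero] using hδ)
  filter_upwards [hdist, hsum] with ⟨t, c⟩ hdist hsum y hy hlt
  have hyδ : y ∈ simBestApprox (A - {c₀}) D δ := by
    refine ⟨hy, ?_⟩
    have hlip := simSup_le_add_dist hA (c₀ + y) (c + y)
    rw [dist_add_right] at hlip
    rw [simSup_sub_singleton]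
    linarith
  obtain ⟨p, hp, e, he, rfl⟩ := hsub hyδ
  refine ⟨c₀ + p, Set.add_mem_add rfl hp, (c - c₀) + e, ?_, by simp only; abel⟩
  rw [mem_closedBall_zero_iff] at he ⊢
  calc ‖c - c₀ + e‖ ≤ ‖c - c₀‖ + ‖e‖ := norm_add_le _ _
    _ ≤ ε / 2 + ε / 2 := add_le_add (dist_eq_norm_sub' c₀ c ▸ hdist.le) he
    _ = ε := add_halves ε

lemma SimStronglyProximinal.eventually_forall_add_mem_simBest_add
    (hD : SimStronglyProximinal D) (hAne : A.Nonempty) (hA : Bornology.IsBounded A)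
    (hc₀ : c₀ ∈ C) (hε : 0 < ε) :
    ∀ᶠ p : ℝ × E in 𝓝 (0, c₀), ∀ y ∈ D, simSup A (p.2 + y) < simDist A (C + D) + p.1 →
      p.2 + y ∈ simBest A (C + D) + Metric.closedBall 0 ε := by
  rcases (simDist_add_le hD.1.nonempty hc₀).eq_or_lt with heq | hlt
  · filter_upwards [hD.eventually_forall_add_mem hAne hA c₀ hε] with p hp y hy hsup
    exact Set.add_subset_add_right (singleton_add_simBest_subset hc₀ heq.symm)
      (hp y hy (heq ▸ hsup))
  · filter_upwards [eventually_forall_add_lt_simSup hA hD.1.nonempty hlt] with p hp y hy hsup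
    exact absurd hsup (hp y hy).not_gt

theorem compact_add_simStronglyProximinal_general (hC : IsCompact C) (hCne : C.Nonempty)
    (hD : SimStronglyProximinal D) : SimStronglyProximinal (C + D) := by
  refine ⟨hD.1.compact_add hC hCne, fun A hAne hA ε hε => ?_⟩
  have huniform : ∀ᶠ δ in 𝓝 (0 : ℝ), ∀ c ∈ C, ∀ y ∈ D, simSup A (c + y) < simDist A (C + D) + δ →
      c + y ∈ simBest A (C + D) + Metric.closedBall 0 ε :=
    hC.eventually_forall_of_forall_eventually fun c₀ hc₀ =>
      hD.eventually_forall_add_mem_simBest_add hAne hA hc₀ hε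
  obtain ⟨δ, hδ, hmem⟩ := huniform.exists_gt
  refine ⟨δ, hδ, ?_⟩
  rintro _ ⟨⟨c, hc, y, hy, rfl⟩, hlt⟩
  exact hmem c hc y hy hlt

end

/-- The sum of a compact convex set and a simultaneously strongly proximinal convex set is
simultaneously strongly proximinal. -/
theorem compact_add_simStronglyProximinal [CompleteSpace X]
    (C D : Set X) (hCne : C.Nonempty) (hDne : D.Nonempty)
    (hCc : Convex ℝ C) (hDc : Convex ℝ D)
    (hC : IsCompact C) (hD : SimStronglyProximinal D) :
    SimStronglyProximinal (C + D) :=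
  compact_add_simStronglyProximinal_general hC hCne hD
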